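/- arXiv:2004.06770 — 3 statements merged into one kernel-verified Lean document; each statement's English description precedes it below -/
import Mathlib

section
/- Let q be a prime power and let n, k, r ≥ 1, δ ≥ 2, ν ≥ 1, j ≥ 0 be integers with k ≤ j+1 ≤ n, j+1 = (r+δ-1)ν, and n(j+1) | (q-1). Let α ∈ F_q be a primitive n(j+1)-th root of unity. Set Z_1 = {1,…,δ-1}, Z_2 = ∪_{l=0}^{ν-1}(Z_1 + l(r+δ-1)), L_3 = ∪_{l=0}^{n-1}(Z_2 + l(j+1)), δ_3 = (n-k)(j+1) + δ - ⌈k(j+1)/r⌉(δ-1), assume δ_3 ≥ 1, set D_3 = {1,…,δ_3 - 1} and Z = L_3 ∪ D_3, and let B be the cyclic code of length n(j+1) over F_q with defining set of zeros Z. Then dim B = k(j+1), B has (r,δ) locality, and the minimum distance of B equals δ_3, i.e., B attains the bound d ≤ N - K + δ - ⌈K/r⌉(δ-1) (with N = n(j+1), K = k(j+1)) with equality. -/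
/-!
Put `s = r + δ - 1`, `m = n * ν` and `N = n * (j + 1) = s * m`, and write `k * (j + 1) = a * r + b`
with `1 ≤ b ≤ r`. Then `⌈k * (j + 1) / r⌉ = a + 1` and `δ₃ = N + 1 - (a * s + b)`.

By finite Fourier inversion (`zeroCode_eq_range`) the code `B` consists of the evaluations
`x ↦ f (α ^ x)` of the polynomials `f` whose exponents lie in `-(complement of Z)` modulo `N`. This
set of exponents is `exps s r (a * s + b)`, i.e. the `u < a * s + b` with `u % s < r`, so `B` is a
Tamo–Barg code, and everything follows by counting zeros of polynomials.

* Dimension: there are `a * r + b` exponents (`card_exps`), all less than `N`, so evaluation at the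
  `N`-th roots of unity is injective (`enc_injective`).
* Locality: on a fibre of `y ↦ y ^ s`, which has `s` elements, `f` agrees with a polynomial of degree
  less than `r`, so a nonzero restriction has at least `s - (r - 1) = δ` nonzero entries
  (`locality`).
* Distance: `f ≠ 0` has degree less than `a * s + b`, so its evaluation has weight at least
  `N - (a * s + b - 1) = δ₃`. Equality holds for the product of `a` factors `X ^ s - β`, with `β`
  distinct `m`-th roots of unity, and `b - 1` linear factors with roots in another fibre
  (`lowWeight`).
-/

open Polynomial Finset

attribute [local instance 10] Classical.propDecidable

noncomputable section

namespace LRC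

variable (F : Type) [Field F]

/-- The linear functional `c ↦ ∑ i, c i * α ^ (i * t)` (evaluation at `α ^ t`). -/
def evalMap (n : ℕ) (α : F) (t : ℕ) : (Fin n → F) →ₗ[F] F :=
  ∑ i : Fin n, α ^ ((i : ℕ) * t) • LinearMap.proj i

/-- The cyclic code of length `n` with defining set of zeros `Z`
(`α` a primitive `n`-th root of unity). -/
def zeroCode (n : ℕ) (α : F) (Z : Set ℕ) : Submodule F (Fin n → F) :=
  ⨅ t ∈ Z, LinearMap.ker (evalMap F n α t)

/-- The polynomial `∑ i, c i • X ^ i` associated with a vector. -/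
def polyEncode (n : ℕ) : (Fin n → F) →ₗ[F] Polynomial F :=
  ∑ i : Fin n, (LinearMap.proj i).smulRight (Polynomial.X ^ (i : ℕ))

/-- The cyclic code of length `n` generated by the polynomial `g`. -/
def genCode (n : ℕ) (g : Polynomial F) : Submodule F (Fin n → F) where
  carrier := {c | g ∣ polyEncode F n c}
  add_mem' := fun {a b} ha hb => by
    simp only [Set.mem_setOf_eq, map_add] at *
    exact dvd_add ha hb
  zero_mem' := by simp only [Set.mem_setOf_eq, map_zero, dvd_zero]
  smul_mem' := fun a c hc => by
    simp only [Set.mem_setOf_eq, map_smul, Polynomial.smul_eq_C_mul] at *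
    exact hc.mul_left _

/-- The punctured (restricted) code of `C` on the coordinate set `S`. -/
def punctured {ι : Type} [Fintype ι] (C : Submodule F (ι → F)) (S : Finset ι) :
    Submodule F (↥S → F) :=
  C.map (LinearMap.funLeft F F (Subtype.val : ↥S → ι))

/-- The minimum distance of a (linear) code is at least `δ`. -/
def minDistGE {ι : Type} [Fintype ι] (C : Set (ι → F)) (δ : ℕ) : Prop :=
  ∀ c ∈ C, c ≠ 0 → δ ≤ hammingNorm c

/-- The minimum distance of a (linear) code equals `d`. -/
def minDistEq {ι : Type} [Fintype ι] (C : Set (ι → F)) (d : ℕ) : Prop :=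
  minDistGE F C d ∧ ∃ c ∈ C, c ≠ 0 ∧ hammingNorm c = d

/-- Locality `r`: each coordinate is a linear function of some `r` other coordinates. -/
def HasLocality {n : ℕ} (C : Set (Fin n → F)) (r : ℕ) : Prop :=
  ∀ i : Fin n, ∃ I : Finset (Fin n), i ∉ I ∧ I.card = r ∧
    ∃ a : Fin n → F, (∀ j ∉ I, a j = 0) ∧ ∀ c ∈ C, c i = ∑ j, a j * c j

/-- `(r, δ)` locality: every coordinate lies in a set of at most `r + δ - 1` coordinates on
which the punctured code has minimum distance at least `δ`. -/
def HasLocalityRD {ι : Type} [Fintype ι] (C : Submodule F (ι → F)) (r δ : ℕ) : Prop :=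
  ∀ i : ι, ∃ J : Finset ι, i ∈ J ∧ J.card ≤ r + δ - 1 ∧
    minDistGE F (punctured F C J : Set (↥J → F)) δ

end LRC

namespace LRC

variable {F : Type} [Field F]

/-! ### The exponent set -/

/-- The exponents `u < L` whose residue modulo `s` is less than `r`. -/
def exps (s r L : ℕ) : Finset ℕ := (Finset.range L).filter (fun u => u % s < r)

theorem mem_exps {s r L u : ℕ} : u ∈ exps s r L ↔ u < L ∧ u % s < r := by
  simp [exps]

theorem card_exps {s r a b : ℕ} (hrs : r ≤ s) (hr : 0 < r) (hb : b ≤ r) :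
    (exps s r (a * s + b)).card = a * r + b := by
  have hs : 0 < s := lt_of_lt_of_le hr hrs
  rw [← Finset.card_range (a * r + b)]
  -- the bijection replaces base `s` by base `r`, keeping quotient and remainder
  refine Finset.card_nbij' (fun u => (u / s) * r + u % s) (fun w => (w / r) * s + w % r)
    ?_ ?_ ?_ ?_
  · intro u hu
    obtain ⟨h1, h2⟩ := mem_exps.1 (Finset.mem_coe.1 hu)
    simp only [Finset.coe_range, Set.mem_Iio]
    have h3 := Nat.div_add_mod u s
    rcases lt_or_ge (u / s) a with h | h
    · have := Nat.mul_le_mul_right r (Nat.succ_le_of_lt h)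
      rw [Nat.succ_mul] at this
      omega
    · have h5 := Nat.mul_le_mul_right s h
      have h6 : u / s = a := by
        refine le_antisymm ?_ h
        apply Nat.le_of_lt_succ
        rw [Nat.div_lt_iff_lt_mul hs, Nat.succ_mul]
        omega
      rw [h6] at h3 ⊢
      rw [mul_comm] at h3
      omega
  · intro w hw
    simp only [Finset.coe_range, Set.mem_Iio] at hw
    have h2 : w % r < r := Nat.mod_lt _ hr
    have h3 := Nat.div_add_mod w r
    change w / r * s + w % r ∈ exps s r (a * s + b)
    refine mem_exps.2 ⟨?_, ?_⟩
    · rcases lt_or_ge (w / r) a with h | h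
      · have := Nat.mul_le_mul_right s (Nat.succ_le_of_lt h)
        rw [Nat.succ_mul] at this
        omega
      · have h6 : w / r = a := by
          refine le_antisymm ?_ h
          apply Nat.le_of_lt_succ
          rw [Nat.div_lt_iff_lt_mul hr, Nat.succ_mul]
          omega
        rw [h6] at h3 ⊢
        rw [mul_comm] at h3
        omega
    · rw [Nat.mul_add_mod', Nat.mod_eq_of_lt (lt_of_lt_of_le h2 hrs)]
      exact h2
  · intro u hu
    obtain ⟨h1, h2⟩ := mem_exps.1 (Finset.mem_coe.1 hu)
    have e1 : (u / s * r + u % s) / r = u / s := by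
      rw [mul_comm, Nat.mul_add_div hr, Nat.div_eq_of_lt h2, add_zero]
    have e2 : (u / s * r + u % s) % r = u % s := by
      rw [Nat.mul_add_mod', Nat.mod_eq_of_lt h2]
    simp only [e1, e2]
    exact Nat.div_add_mod' u s
  · intro w hw
    have h2 : w % r < s := lt_of_lt_of_le (Nat.mod_lt _ hr) hrs
    have e1 : (w / r * s + w % r) / s = w / r := by
      rw [mul_comm, Nat.mul_add_div hs, Nat.div_eq_of_lt h2, add_zero]
    have e2 : (w / r * s + w % r) % s = w % r := by
      rw [Nat.mul_add_mod', Nat.mod_eq_of_lt h2]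
    simp only [e1, e2]
    exact Nat.div_add_mod' w r

/-! ### Evaluation codes and finite Fourier inversion -/

/-- A nonzero polynomial vanishes at no more than `natDegree` of the given points. -/
theorem card_le_natDegree_add_hammingNorm {ι : Type} [Fintype ι] (p : ι → F)
    (hp : Function.Injective p) (f : F[X]) (hf : f ≠ 0) :
    Fintype.card ι ≤ f.natDegree + hammingNorm (fun i => f.eval (p i)) := by
  have h1 : (Finset.univ.filter (fun i => f.eval (p i) = 0)).card ≤ f.natDegree := by
    calc _ = ((Finset.univ.filter (fun i => f.eval (p i) = 0)).image p).card :=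
          (Finset.card_image_of_injective _ hp).symm
      _ ≤ f.roots.toFinset.card := by
          apply Finset.card_le_card
          intro y hy
          simp only [Finset.mem_image, Finset.mem_filter, Finset.mem_univ, true_and] at hy
          obtain ⟨i, hi, rfl⟩ := hy
          simp [hf, hi]
      _ ≤ f.roots.card := Multiset.toFinset_card_le _
      _ ≤ f.natDegree := f.card_roots'
  have h2 := Finset.card_filter_add_card_filter_not
    (s := (Finset.univ : Finset ι)) (fun i => f.eval (p i) = 0)
  rw [Finset.card_univ] at h2
  have h3 : hammingNorm (fun i => f.eval (p i)) =
      (Finset.univ.filter (fun i => ¬ f.eval (p i) = 0)).card := by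
    unfold hammingNorm
    congr
  omega

theorem geom_sum_zero {ζ : F} {N : ℕ} (h1 : ζ ^ N = 1) (h2 : ζ ≠ 1) :
    ∑ i ∈ Finset.range N, ζ ^ i = 0 := by
  rw [geom_sum_eq h2, h1, sub_self, zero_div]

theorem mem_zeroCode {N : ℕ} {α : F} {Z : Set ℕ} {c : Fin N → F} :
    c ∈ zeroCode F N α Z ↔ ∀ t ∈ Z, ∑ i : Fin N, α ^ ((i : ℕ) * t) * c i = 0 := by
  simp [zeroCode, evalMap, Submodule.mem_iInf]

/-- The encoder `a ↦ (∑ u ∈ E, a u * (α ^ x) ^ u)_x`. -/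
def enc (N : ℕ) (α : F) (E : Finset ℕ) : (↥E → F) →ₗ[F] (Fin N → F) where
  toFun a x := ∑ u : ↥E, a u * (α ^ (x : ℕ)) ^ (u : ℕ)
  map_add' a b := by
    ext x
    simp [add_mul, Finset.sum_add_distrib]
  map_smul' a b := by
    ext x
    simp [Finset.mul_sum, mul_assoc]

/-- `enc` is polynomial evaluation at the powers of `α`. -/
theorem enc_eq_eval {N : ℕ} (α : F) (E : Finset ℕ) (f : F[X])
    (hf : ∀ u, f.coeff u ≠ 0 → u ∈ E) :
    enc N α E (fun u => f.coeff (u : ℕ)) = fun x : Fin N => f.eval (α ^ (x : ℕ)) := by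
  ext x
  rw [Polynomial.eval_eq_sum, Polynomial.sum]
  rw [Finset.sum_subset (s₂ := E) (fun u hu => hf u (Polynomial.mem_support_iff.1 hu))]
  · exact Finset.sum_coe_sort E (fun u => f.coeff u * (α ^ (x : ℕ)) ^ u)
  · intro u _ hu
    rw [Polynomial.notMem_support_iff.1 hu, zero_mul]

/-- Every message of `enc` is the coefficient vector of a polynomial with exponents in `E`. -/
theorem exists_poly (E : Finset ℕ) (a : ↥E → F) :
    ∃ f : F[X], (∀ u, f.coeff u ≠ 0 → u ∈ E) ∧ a = fun u : ↥E => f.coeff (u : ℕ) := by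
  refine ⟨∑ u : ↥E, Polynomial.monomial (u : ℕ) (a u), ?_, ?_⟩
  · intro u hu
    by_contra h
    apply hu
    rw [Polynomial.finsetSum_coeff]
    refine Finset.sum_eq_zero fun v _ => ?_
    rw [Polynomial.coeff_monomial, if_neg]
    rintro rfl
    exact h v.2
  · ext u
    rw [Polynomial.finsetSum_coeff, Finset.sum_eq_single u]
    · simp
    · intro v _ hv
      rw [Polynomial.coeff_monomial, if_neg]
      exact fun h => hv (Subtype.ext h)
    · simp

theorem natDegree_lt_of_exps {s r L : ℕ} (hL : 0 < L) {f : F[X]}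
    (hf : ∀ u, f.coeff u ≠ 0 → u ∈ exps s r L) : f.natDegree < L := by
  by_cases h : f = 0
  · simpa [h] using hL
  · exact (mem_exps.1 (hf _ (by simpa using h))).1

theorem pow_injective {N : ℕ} {α : F} (hα : IsPrimitiveRoot α N) :
    Function.Injective (fun x : Fin N => α ^ (x : ℕ)) := fun x y h =>
  Fin.ext (hα.pow_inj x.2 y.2 h)

/-- The fibre of `X ^ s` containing `α ^ w` is determined by `w` modulo `m`. -/
theorem pow_mul_mod {s m N : ℕ} (hN : N = s * m) {α : F} (hα : IsPrimitiveRoot α N) (w : ℕ) :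
    α ^ (w * s) = α ^ (w % m * s) := by
  have e : w * s = w % m * s + N * (w / m) := by
    conv_lhs => rw [← Nat.mod_add_div w m]
    rw [hN]
    ring
  rw [e, pow_add, pow_mul α N, hα.pow_eq_one, one_pow, mul_one]

theorem enc_injective {N : ℕ} {α : F} (hα : IsPrimitiveRoot α N) {s r L : ℕ}
    (hL : 0 < L) (hLN : L ≤ N) : Function.Injective (enc N α (exps s r L)) := by
  rw [← LinearMap.ker_eq_bot, LinearMap.ker_eq_bot']
  intro a ha
  obtain ⟨f, hf, rfl⟩ := exists_poly _ a
  rw [enc_eq_eval α _ f hf] at ha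
  have hdeg := natDegree_lt_of_exps hL hf
  by_cases h : f = 0
  · ext u
    simp [h]
  · have := card_le_natDegree_add_hammingNorm _ (pow_injective hα) f h
    rw [ha, hammingNorm_zero, Fintype.card_fin] at this
    omega

/-- A finite Fourier transform: prescribing the zeros `Z` amounts to restricting the exponents
to the complement of `-Z` modulo `N`. -/
theorem zeroCode_eq_range {N : ℕ} (hN : 0 < N) {α : F} (hα : IsPrimitiveRoot α N)
    {Z : Set ℕ} {E : Finset ℕ} (hZ : ∀ t ∈ Z, 1 ≤ t ∧ t < N) (hE : ∀ u ∈ E, u < N)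
    (h0 : 0 ∈ E) (hZE : ∀ t, 1 ≤ t → t < N → (t ∈ Z ↔ N - t ∉ E)) :
    zeroCode F N α Z = LinearMap.range (enc N α E) := by
  have hα0 : α ≠ 0 := hα.ne_zero hN.ne'
  have hNF : (N : F) ≠ 0 := by
    have : NeZero N := ⟨hN.ne'⟩
    exact (hα.neZero').out
  apply le_antisymm
  · intro c hc
    rw [mem_zeroCode] at hc
    refine ⟨fun u => (N : F)⁻¹ * ∑ y : Fin N, c y * (α⁻¹ ^ (y : ℕ)) ^ (u : ℕ), ?_⟩
    ext x
    have hzero : ∀ u ∈ Finset.range N, u ∉ E →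
        ((N : F)⁻¹ * ∑ y : Fin N, c y * (α⁻¹ ^ (y : ℕ)) ^ u) * (α ^ (x : ℕ)) ^ u = 0 := by
      intro u hu huE
      have hu' := Finset.mem_range.1 hu
      have hu0 : u ≠ 0 := by
        rintro rfl
        exact huE h0
      have ht := (hZE (N - u) (by omega) (by omega)).2
        (by rwa [Nat.sub_sub_self hu'.le])
      have := hc _ ht
      have h3 : ∑ y : Fin N, c y * (α⁻¹ ^ (y : ℕ)) ^ u = 0 := by
        rw [← this]
        refine Finset.sum_congr rfl fun y _ => ?_
        rw [mul_comm]
        congr 1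
        rw [← pow_mul, inv_pow, inv_eq_iff_eq_inv, eq_comm, inv_eq_iff_eq_inv, eq_comm,
          inv_eq_of_mul_eq_one_left]
        rw [← pow_add, ← mul_add, Nat.sub_add_cancel hu'.le, mul_comm, pow_mul, hα.pow_eq_one,
          one_pow]
      rw [h3, mul_zero, zero_mul]
    change ∑ u : ↥E, ((N : F)⁻¹ * ∑ y : Fin N, c y * (α⁻¹ ^ (y : ℕ)) ^ (u : ℕ)) *
      (α ^ (x : ℕ)) ^ (u : ℕ) = c x
    rw [Finset.sum_coe_sort E (fun u => ((N : F)⁻¹ * ∑ y : Fin N, c y * (α⁻¹ ^ (y : ℕ)) ^ u) *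
      (α ^ (x : ℕ)) ^ u)]
    rw [Finset.sum_subset (s₂ := Finset.range N) (fun u hu => Finset.mem_range.2 (hE u hu)) hzero]
    have hswap : ∑ u ∈ Finset.range N, ((N : F)⁻¹ * ∑ y : Fin N, c y * (α⁻¹ ^ (y : ℕ)) ^ u) *
        (α ^ (x : ℕ)) ^ u = ∑ y : Fin N, (N : F)⁻¹ * c y *
          ∑ u ∈ Finset.range N, (α⁻¹ ^ (y : ℕ) * α ^ (x : ℕ)) ^ u := by
      simp only [Finset.mul_sum, Finset.sum_mul]
      rw [Finset.sum_comm]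
      refine Finset.sum_congr rfl fun y _ => Finset.sum_congr rfl fun u _ => ?_
      rw [mul_pow]
      ring
    rw [hswap, Finset.sum_eq_single x]
    · have : α⁻¹ ^ (x : ℕ) * α ^ (x : ℕ) = 1 := by
        rw [← mul_pow, inv_mul_cancel₀ hα0, one_pow]
      rw [this]
      simp only [one_pow, Finset.sum_const, Finset.card_range, nsmul_eq_mul, mul_one]
      rw [mul_right_comm, inv_mul_cancel₀ hNF, one_mul]
    · intro y _ hy
      rw [geom_sum_zero, mul_zero]
      · rw [mul_pow, ← pow_mul, ← pow_mul, mul_comm (y : ℕ), mul_comm (x : ℕ), pow_mul, pow_mul,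
          inv_pow, hα.pow_eq_one]
        simp
      · intro h
        apply hy
        apply pow_injective hα
        rw [inv_pow] at h
        exact ((inv_mul_eq_one₀ (pow_ne_zero _ hα0)).1 h)
    · simp
  · rintro _ ⟨a, rfl⟩
    rw [mem_zeroCode]
    intro t ht
    obtain ⟨ht1, htN⟩ := hZ t ht
    change ∑ x : Fin N, α ^ ((x : ℕ) * t) * ∑ u : ↥E, a u * (α ^ (x : ℕ)) ^ (u : ℕ) = 0
    simp only [Finset.mul_sum]
    rw [Finset.sum_comm]
    refine Finset.sum_eq_zero fun u _ => ?_
    have : ∑ x : Fin N, α ^ ((x : ℕ) * t) * (a u * (α ^ (x : ℕ)) ^ (u : ℕ)) =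
        a u * ∑ x ∈ Finset.range N, (α ^ (t + (u : ℕ))) ^ x := by
      rw [← Fin.sum_univ_eq_sum_range, Finset.mul_sum]
      refine Finset.sum_congr rfl fun x _ => ?_
      rw [← pow_mul, ← pow_mul, add_mul, pow_add, mul_comm t, mul_comm (u : ℕ)]
      ring
    rw [this, geom_sum_zero, mul_zero]
    · rw [← pow_mul, mul_comm, pow_mul, hα.pow_eq_one, one_pow]
    · intro h
      have hd := hα.dvd_of_pow_eq_one _ h
      have huN := hE _ u.2
      -- `0 < t + u < 2 * N`, so the only multiple of `N` it can be is `N`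
      have : t + (u : ℕ) = N := by
        obtain ⟨w, hw⟩ := hd
        have hw1 : w = 1 := by
          have : w < 2 := by
            by_contra! h2
            have := Nat.mul_le_mul_left N h2
            omega
          have : w ≠ 0 := by
            rintro rfl
            omega
          omega
        rw [hw, hw1, mul_one]
      refine (hZE t ht1 htN).1 ht ?_
      rw [show N - t = (u : ℕ) by omega]
      exact u.2

/-! ### Locality -/

/-- On a fibre `X ^ s = β` a polynomial with exponents in `exps s r L` agrees with one of degree
less than `r`. -/
theorem exists_local_poly {s r L : ℕ} (hr : 0 < r) (f : F[X])
    (hf : ∀ u, f.coeff u ≠ 0 → u ∈ exps s r L) (β : F) :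
    ∃ g : F[X], g.natDegree < r ∧ ∀ y, y ^ s = β → f.eval y = g.eval y := by
  refine ⟨∑ u ∈ f.support, Polynomial.C (f.coeff u * β ^ (u / s)) * Polynomial.X ^ (u % s),
    ?_, ?_⟩
  · have : (∑ u ∈ f.support, Polynomial.C (f.coeff u * β ^ (u / s)) *
        (Polynomial.X : F[X]) ^ (u % s)).natDegree ≤ r - 1 := by
      apply Polynomial.natDegree_sum_le_of_forall_le
      intro u hu
      refine (Polynomial.natDegree_C_mul_X_pow_le _ _).trans ?_
      have := (mem_exps.1 (hf u (Polynomial.mem_support_iff.1 hu))).2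
      omega
    omega
  · rintro y rfl
    rw [Polynomial.eval_eq_sum, Polynomial.sum, Polynomial.eval_finsetSum]
    refine Finset.sum_congr rfl fun u _ => ?_
    simp only [Polynomial.eval_mul, Polynomial.eval_C, Polynomial.eval_pow, Polynomial.eval_X]
    rw [mul_assoc, ← pow_mul, ← pow_add, Nat.div_add_mod]

/-- The local groups are the residue classes modulo `m`, i.e. the fibres of `X ^ s` on the
`s * m`-th roots of unity. -/
theorem locality {s m r δ L : ℕ} (hs : s = r + δ - 1) (hr : 0 < r) (hδ : 0 < δ) (hm : 0 < m)
    {N : ℕ} (hN : N = s * m) {α : F} (hα : IsPrimitiveRoot α N) :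
    HasLocalityRD F (LinearMap.range (enc N α (exps s r L))) r δ := by
  intro x₀
  have hs0 : 0 < s := by omega
  let J : Finset (Fin N) := Finset.univ.filter fun x => (x : ℕ) % m = (x₀ : ℕ) % m
  have hJcard : J.card = s := by
    rw [← Finset.card_range s]
    symm
    have hlt : ∀ y, y < s → (x₀ : ℕ) % m + m * y < N := by
      intro y hy
      have h1 := Nat.mod_lt (x₀ : ℕ) hm
      have h2 := Nat.mul_le_mul_left m (Nat.succ_le_of_lt hy)
      rw [Nat.mul_succ, mul_comm m s, ← hN] at h2
      omega
    refine Finset.card_bij (fun y hy => ⟨(x₀ : ℕ) % m + m * y, hlt y (Finset.mem_range.1 hy)⟩)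
      ?_ ?_ ?_
    · intro y hy
      simp [J]
    · intro y _ y' _ h
      have h' := Fin.mk.inj h
      exact Nat.eq_of_mul_eq_mul_left hm (by omega)
    · intro x hx
      have hx' : (x : ℕ) % m = (x₀ : ℕ) % m := by simpa [J] using hx
      refine ⟨(x : ℕ) / m, ?_, ?_⟩
      · rw [Finset.mem_range, Nat.div_lt_iff_lt_mul hm, ← hN]
        exact x.2
      · apply Fin.ext
        simp only
        rw [← hx', Nat.mod_add_div]
  refine ⟨J, by simp [J], by omega, ?_⟩
  rintro _ ⟨_, ⟨a, rfl⟩, rfl⟩ hc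
  obtain ⟨f, hf, rfl⟩ := exists_poly _ a
  rw [enc_eq_eval α _ f hf] at hc ⊢
  obtain ⟨g, hg, hfg⟩ := exists_local_poly hr f hf (α ^ ((x₀ : ℕ) * s))
  have hfib : ∀ x ∈ J, (α ^ (x : ℕ)) ^ s = α ^ ((x₀ : ℕ) * s) := by
    intro x hx
    have hx' : (x : ℕ) % m = (x₀ : ℕ) % m := by simpa [J] using hx
    rw [← pow_mul, pow_mul_mod hN hα, hx', ← pow_mul_mod hN hα]
  have heq : (LinearMap.funLeft F F (Subtype.val : ↥J → Fin N))
      (fun x => f.eval (α ^ (x : ℕ))) = fun i : ↥J => g.eval (α ^ ((i : Fin N) : ℕ)) := by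
    ext i
    exact hfg _ (hfib i i.2)
  rw [heq] at hc ⊢
  have hg0 : g ≠ 0 := by
    rintro rfl
    apply hc
    ext i
    simp
  have := card_le_natDegree_add_hammingNorm (fun i : ↥J => α ^ ((i : Fin N) : ℕ))
    ((pow_injective hα).comp Subtype.val_injective) g hg0
  rw [Fintype.card_coe, hJcard] at this
  omega

/-! ### Minimum distance -/

/-- `∏ i < a, (X ^ s - α ^ (i * s)) * ∏ y < b - 1, (X - α ^ (a + m * y))`: it vanishes on `a` whole
fibres of `X ^ s` and at `b - 1` points of one further fibre. -/
def lowWeight (s m a b : ℕ) (α : F) : F[X] :=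
  (∏ i ∈ Finset.range a, (Polynomial.X ^ s - Polynomial.C (α ^ (i * s)))) *
    ∏ y ∈ Finset.range (b - 1), (Polynomial.X - Polynomial.C (α ^ (a + m * y)))

theorem prod_fibres_eq_expand {s a : ℕ} (β : ℕ → F) :
    ∃ P : F[X], ∏ i ∈ Finset.range a, (Polynomial.X ^ s - Polynomial.C (β i)) =
      Polynomial.expand F s P ∧ P.natDegree ≤ a := by
  refine ⟨∏ i ∈ Finset.range a, (Polynomial.X - Polynomial.C (β i)), ?_, ?_⟩
  · rw [map_prod]
    simp
  · rw [Polynomial.natDegree_prod_of_monic _ _ fun i _ => Polynomial.monic_X_sub_C _]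
    simp

/-- The first product is a polynomial in `X ^ s` and the second has degree `b - 1 < r`, so all
exponents have residue less than `r` modulo `s`. -/
theorem lowWeight_support {s m r a b : ℕ} (hrs : r ≤ s) (hb1 : 1 ≤ b) (hb : b ≤ r) (α : F)
    (u : ℕ) (hu : (lowWeight s m a b α).coeff u ≠ 0) : u ∈ exps s r (a * s + b) := by
  have hs : 0 < s := by omega
  unfold lowWeight at hu
  obtain ⟨P, hP, hPd⟩ := prod_fibres_eq_expand (s := s) (a := a) fun i => α ^ (i * s)
  rw [hP, Polynomial.coeff_mul] at hu
  obtain ⟨⟨v, w⟩, hvw, hne⟩ := Finset.exists_ne_zero_of_sum_ne_zero hu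
  have hvw' := Finset.HasAntidiagonal.mem_antidiagonal.1 hvw
  simp only at hvw' hne
  have hv := left_ne_zero_of_mul hne
  have hw := Polynomial.le_natDegree_of_ne_zero (right_ne_zero_of_mul hne)
  rw [Polynomial.natDegree_prod_of_monic _ _ fun i _ => Polynomial.monic_X_sub_C _] at hw
  simp only [Polynomial.natDegree_X_sub_C, Finset.sum_const, Finset.card_range, smul_eq_mul,
    mul_one] at hw
  rw [Polynomial.coeff_expand hs] at hv
  split_ifs at hv with hd
  · have hv' := (Polynomial.le_natDegree_of_ne_zero hv).trans hPd
    obtain ⟨e, rfl⟩ := hd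
    rw [Nat.mul_div_cancel_left _ hs] at hv'
    have := Nat.mul_le_mul_left s hv'
    rw [mul_comm s a] at this
    refine mem_exps.2 ⟨by omega, ?_⟩
    rw [← hvw', Nat.mul_add_mod, Nat.mod_eq_of_lt (by omega)]
    omega
  · exact absurd rfl hv

theorem lowWeight_ne_zero {s m a b : ℕ} (hs : 0 < s) (α : F) : lowWeight s m a b α ≠ 0 := by
  refine mul_ne_zero (Finset.prod_ne_zero_iff.2 fun i _ => ?_)
    (Finset.prod_ne_zero_iff.2 fun i _ => Polynomial.X_sub_C_ne_zero _)
  exact Polynomial.X_pow_sub_C_ne_zero hs _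

theorem lowWeight_zeros {s m r a b N : ℕ} (hrs : r ≤ s) (hb1 : 1 ≤ b) (hb : b ≤ r)
    (hm : 0 < m) (hN : N = s * m) (hL : a * s + b ≤ N) {α : F} (hα : IsPrimitiveRoot α N) :
    hammingNorm (fun x : Fin N => (lowWeight s m a b α).eval (α ^ (x : ℕ))) + (a * s + b - 1)
      ≤ N := by
  have hs : 0 < s := by omega
  have ham : a < m := by
    by_contra! h
    have := Nat.mul_le_mul_right s h
    rw [mul_comm m s, ← hN] at this
    omega
  -- the zeros are `i + m * y` with `i < a`, `y < s`, or with `i = a`, `y < b - 1`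
  have hlt : ∀ i < m, ∀ y < s, i + m * y < N := by
    intro i hi y hy
    have h2 := Nat.mul_le_mul_left m (Nat.succ_le_of_lt hy)
    rw [Nat.mul_succ, mul_comm m s, ← hN] at h2
    omega
  have hzero : ∀ x : Fin N, (x : ℕ) % m < a ∨ ((x : ℕ) % m = a ∧ (x : ℕ) / m < b - 1) →
      (lowWeight s m a b α).eval (α ^ (x : ℕ)) = 0 := by
    intro x hx
    have hx2 := Nat.mod_add_div (x : ℕ) m
    unfold lowWeight
    rw [Polynomial.eval_mul, Polynomial.eval_prod, Polynomial.eval_prod]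
    rcases hx with hx | ⟨hx, hx'⟩
    · rw [Finset.prod_eq_zero (Finset.mem_range.2 hx), zero_mul]
      simp only [Polynomial.eval_sub, Polynomial.eval_pow, Polynomial.eval_X, Polynomial.eval_C]
      rw [sub_eq_zero, ← pow_mul, pow_mul_mod hN hα]
    · rw [mul_comm, Finset.prod_eq_zero (Finset.mem_range.2 hx'), zero_mul]
      simp only [Polynomial.eval_sub, Polynomial.eval_X, Polynomial.eval_C]
      rw [← hx, hx2, sub_self]
  let T : Finset (ℕ × ℕ) := (Finset.range a ×ˢ Finset.range s) ∪
    ({a} ×ˢ Finset.range (b - 1))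
  have hTcard : T.card = a * s + (b - 1) := by
    rw [Finset.card_union_of_disjoint]
    · simp
    · rw [Finset.disjoint_left]
      rintro ⟨i, y⟩ h1 h2
      simp only [Finset.mem_product, Finset.mem_range, Finset.mem_singleton] at h1 h2
      omega
  have hTmem : ∀ p ∈ T, p.2 < s ∧ (p.1 < a ∨ (p.1 = a ∧ p.2 < b - 1)) := by
    rintro ⟨i, y⟩ h
    simp only [T, Finset.mem_union, Finset.mem_product, Finset.mem_range,
      Finset.mem_singleton] at h
    simp only
    omega
  have hle : T.card ≤ (Finset.univ.filter fun x : Fin N =>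
      (lowWeight s m a b α).eval (α ^ (x : ℕ)) = 0).card := by
    have hdm : ∀ p ∈ T, (p.1 + m * p.2) % m = p.1 ∧ (p.1 + m * p.2) / m = p.2 := by
      intro p hp
      have := hTmem p hp
      have hp1 : p.1 < m := by omega
      constructor
      · rw [Nat.add_mul_mod_self_left, Nat.mod_eq_of_lt hp1]
      · rw [Nat.add_mul_div_left _ _ hm, Nat.div_eq_of_lt hp1, zero_add]
    refine Finset.card_le_card_of_injOn
      (fun p => if h : p.1 + m * p.2 < N then ⟨p.1 + m * p.2, h⟩ else ⟨0, by omega⟩) ?_ ?_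
    · intro p hp
      have h := hTmem p hp
      have hd := hdm p hp
      have h' : p.1 + m * p.2 < N := hlt _ (by omega) _ h.1
      simp only [dif_pos h', Finset.coe_filter, Finset.mem_univ, true_and,
        Set.mem_ofPred_eq]
      refine hzero ⟨_, h'⟩ ?_
      simp only [hd.1, hd.2]
      exact h.2
    · intro p hp p' hp' heq
      have h := hTmem p hp
      have h2 := hTmem p' hp'
      have hd := hdm p hp
      have hd2 := hdm p' hp'
      have h' : p.1 + m * p.2 < N := hlt _ (by omega) _ h.1
      have h'' : p'.1 + m * p'.2 < N := hlt _ (by omega) _ h2.1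
      simp only [dif_pos h', dif_pos h'', Fin.mk.injEq] at heq
      refine Prod.ext ?_ ?_
      · rw [← hd.1, heq, hd2.1]
      · rw [← hd.2, heq, hd2.2]
  have h2 := Finset.card_filter_add_card_filter_not
    (s := (Finset.univ : Finset (Fin N)))
    (fun x => (lowWeight s m a b α).eval (α ^ (x : ℕ)) = 0)
  rw [Finset.card_univ, Fintype.card_fin] at h2
  have h3 : hammingNorm (fun x : Fin N => (lowWeight s m a b α).eval (α ^ (x : ℕ))) =
      (Finset.univ.filter (fun x : Fin N =>
        ¬ (lowWeight s m a b α).eval (α ^ (x : ℕ)) = 0)).card := by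
    unfold hammingNorm
    congr
  omega

theorem minDist_range {s m r a b N : ℕ} (hrs : r ≤ s) (hb1 : 1 ≤ b) (hb : b ≤ r)
    (hm : 0 < m) (hN : N = s * m) (hL : a * s + b ≤ N) {α : F} (hα : IsPrimitiveRoot α N)
    {d : ℕ} (hd : d + (a * s + b) = N + 1) :
    minDistEq F (LinearMap.range (enc N α (exps s r (a * s + b))) : Set (Fin N → F)) d := by
  have hlow : ∀ f : F[X], (∀ u, f.coeff u ≠ 0 → u ∈ exps s r (a * s + b)) → f ≠ 0 →
      d ≤ hammingNorm (fun x : Fin N => f.eval (α ^ (x : ℕ))) := by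
    intro f hf hf0
    have h1 := natDegree_lt_of_exps (by omega) hf
    have h2 := card_le_natDegree_add_hammingNorm _ (pow_injective hα) f hf0
    rw [Fintype.card_fin] at h2
    omega
  refine ⟨?_, ?_⟩
  · rintro _ ⟨a', rfl⟩ hc
    obtain ⟨f, hf, rfl⟩ := exists_poly _ a'
    rw [enc_eq_eval α _ f hf] at hc ⊢
    apply hlow f hf
    rintro rfl
    apply hc
    ext x
    simp
  · have hsup := lowWeight_support (m := m) (a := a) hrs hb1 hb α
    have h1 := hlow _ hsup (lowWeight_ne_zero (by omega) α)
    have h2 := lowWeight_zeros (a := a) hrs hb1 hb hm hN hL hα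
    refine ⟨_, ⟨_, enc_eq_eval α _ _ hsup⟩, ?_, ?_⟩
    · intro h
      rw [h, hammingNorm_zero] at h1
      omega
    · omega

/-! ### The defining set -/

/-- Exponents in `1, …, s * m - 1` lie in the union of translated blocks `{1, …, δ - 1}` exactly
when their negatives modulo `s * m` have residue at least `r` modulo `s`. -/
theorem mod_reflect {s m r δ t : ℕ} (hs : s = r + δ - 1) (hr : 0 < r) (hδ : 0 < δ)
    (ht1 : 1 ≤ t) (ht : t < s * m) : (t - 1) % s < δ - 1 ↔ ¬ (s * m - t) % s < r := by
  have hs0 : 0 < s := by omega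
  obtain ⟨v, rfl⟩ : ∃ v, t = v + 1 := ⟨t - 1, by omega⟩
  have h1 := Nat.div_add_mod v s
  have h2 := Nat.mod_lt v hs0
  have h3 : v / s + 1 ≤ m := by
    rw [Nat.succ_le_iff, Nat.div_lt_iff_lt_mul hs0, mul_comm]
    omega
  obtain ⟨w, hw⟩ := Nat.exists_eq_add_of_le h3
  have h4 : s * m - (v + 1) = s * w + (s - 1 - v % s) := by
    rw [hw, mul_add, mul_add, mul_one]
    omega
  rw [h4, Nat.mul_add_mod, Nat.mod_eq_of_lt (by omega : s - 1 - v % s < s), Nat.add_sub_cancel]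
  omega

/-- The double union of translated blocks `{1, …, δ - 1}` is a single residue condition. -/
theorem mem_blocks {s n ν δ t : ℕ} (hδs : δ - 1 < s) (hν : 0 < ν) :
    (∃ l < n, ∃ l' < ν, ∃ i, 1 ≤ i ∧ i ≤ δ - 1 ∧ t = i + l' * s + l * (s * ν)) ↔
      1 ≤ t ∧ t ≤ s * (n * ν) ∧ (t - 1) % s < δ - 1 := by
  have hs : 0 < s := by omega
  constructor
  · rintro ⟨l, hl, l', hl', i, hi1, hi, rfl⟩
    have e : i + l' * s + l * (s * ν) = i + s * (l' + l * ν) := by ring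
    have h1 : l' + l * ν + 1 ≤ n * ν := by
      have := Nat.mul_le_mul_right ν (Nat.succ_le_of_lt hl)
      rw [Nat.succ_mul] at this
      omega
    have h2 := Nat.mul_le_mul_left s h1
    rw [mul_add, mul_one] at h2
    rw [e]
    refine ⟨by omega, by omega, ?_⟩
    rw [show i + s * (l' + l * ν) - 1 = (i - 1) + s * (l' + l * ν) by omega,
      Nat.add_mul_mod_self_left, Nat.mod_eq_of_lt (by omega)]
    omega
  · rintro ⟨h1, h2, h3⟩
    have h4 := Nat.div_add_mod (t - 1) s
    have h5 := Nat.mod_add_div ((t - 1) / s) ν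
    refine ⟨(t - 1) / s / ν, ?_, (t - 1) / s % ν, Nat.mod_lt _ hν, (t - 1) % s + 1, by omega,
      by omega, ?_⟩
    · rw [Nat.div_lt_iff_lt_mul hν, Nat.div_lt_iff_lt_mul hs, mul_comm _ s]
      omega
    · have e : (t - 1) / s % ν * s + (t - 1) / s / ν * (s * ν) = s * ((t - 1) / s) := by
        conv_rhs => rw [← h5]
        ring
      rw [add_assoc, e]
      omega

end LRC

/-- The quasicyclic block LRC code `B` underlying the convolutional
construction: dimension, locality, and optimal distance. -/
theorem statement16 (q n k r δ ν j : ℕ) (F : Type) [Field F] [Fintype F]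
    (hq : ∃ p s : ℕ, p.Prime ∧ 0 < s ∧ q = p ^ s)
    (hcard : Fintype.card F = q)
    (hk : 1 ≤ k) (hr : 1 ≤ r) (hδ : 2 ≤ δ) (hν : 1 ≤ ν)
    (hkj : k ≤ j + 1) (hjn : j + 1 ≤ n) (hj1 : j + 1 = (r + δ - 1) * ν)
    (hdvd : n * (j + 1) ∣ q - 1)
    (α : F) (hα : IsPrimitiveRoot α (n * (j + 1)))
    (δ₃ : ℕ) (hδ₃pos : 1 ≤ δ₃)
    (hδ₃ : (δ₃ : ℤ) = ((n : ℤ) - k) * (j + 1) + δ -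
      (((k * (j + 1) + r - 1) / r : ℕ) : ℤ) * ((δ : ℤ) - 1))
    (Z : Set ℕ)
    (hZ : Z = {t | ∃ l < n, ∃ l' < ν, ∃ i, 1 ≤ i ∧ i ≤ δ - 1 ∧
                    t = i + l' * (r + δ - 1) + l * (j + 1)} ∪
              {t | 1 ≤ t ∧ t ≤ δ₃ - 1})
    (B : Submodule F (Fin (n * (j + 1)) → F))
    (hB : B = LRC.zeroCode F (n * (j + 1)) α Z) :
    Module.finrank F B = k * (j + 1) ∧
    LRC.HasLocalityRD F B r δ ∧
    LRC.minDistEq F (B : Set (Fin (n * (j + 1)) → F)) δ₃ := by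
  subst hB
  set s := r + δ - 1 with hs
  have hs0 : 0 < s := by omega
  set N := n * (j + 1) with hNdef
  have hNm : N = s * (n * ν) := by rw [hNdef, hj1]; ring
  have hn : 0 < n := by omega
  have hm : 0 < n * ν := Nat.mul_pos hn hν
  have hN : 0 < N := by rw [hNm]; exact Nat.mul_pos hs0 hm
  have hK : 0 < k * (j + 1) := Nat.mul_pos hk (Nat.succ_pos j)
  -- write `K = a * r + b` with `1 ≤ b ≤ r`, so that `⌈K / r⌉ = a + 1`
  obtain ⟨a, b, hb1, hb, hab⟩ : ∃ a b, 1 ≤ b ∧ b ≤ r ∧ k * (j + 1) = a * r + b := by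
    refine ⟨(k * (j + 1) - 1) / r, (k * (j + 1) - 1) % r + 1, by omega,
      Nat.mod_lt _ hr, ?_⟩
    have := Nat.div_add_mod' (k * (j + 1) - 1) r
    omega
  have hceil : (k * (j + 1) + r - 1) / r = a + 1 := by
    rw [hab, show a * r + b + r - 1 = r * (a + 1) + (b - 1) by
      rw [mul_add, mul_comm r a]; omega, Nat.mul_add_div hr, Nat.div_eq_of_lt (by omega), add_zero]
  have hd : δ₃ + (a * s + b) = N + 1 := by
    rw [hceil] at hδ₃
    have hab' : (k : ℤ) * (j + 1) = a * r + b := by exact_mod_cast hab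
    have hN' : (N : ℤ) = n * (j + 1) := by rw [hNdef]; push_cast; ring
    have hs' : (s : ℤ) = r + δ - 1 := by omega
    zify
    rw [hδ₃, hs', hN']
    push_cast
    linear_combination -hab'
  have hL : a * s + b ≤ N := by omega
  have hmemZ : ∀ t, t ∈ Z ↔ (1 ≤ t ∧ t ≤ N ∧ (t - 1) % s < δ - 1) ∨ (1 ≤ t ∧ t ≤ δ₃ - 1) := by
    intro t
    rw [hZ, hNm, ← LRC.mem_blocks (by omega) hν, ← hj1]
    rfl
  have hBr : LRC.zeroCode F N α Z =
      LinearMap.range (LRC.enc N α (LRC.exps s r (a * s + b))) := by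
    apply LRC.zeroCode_eq_range hN hα
    · intro t ht
      rcases (hmemZ t).1 ht with ⟨h1, h2, h3⟩ | ⟨h1, h2⟩
      · refine ⟨h1, lt_of_le_of_ne h2 ?_⟩
        -- `N - 1` has residue `s - 1 ≥ δ - 1` modulo `s`
        rintro rfl
        obtain ⟨w, hw⟩ := Nat.exists_eq_add_of_le hm
        rw [hNm, hw, Nat.mul_add, Nat.add_comm (s * _),
          show s * w + s * (0 + 1) - 1 = s * w + (s - 1) by omega, Nat.mul_add_mod,
          Nat.mod_eq_of_lt (by omega)] at h3
        omega
      · exact ⟨h1, by omega⟩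
    · intro u hu
      exact lt_of_lt_of_le (LRC.mem_exps.1 hu).1 hL
    · exact LRC.mem_exps.2 ⟨by omega, by rw [Nat.zero_mod]; exact hr⟩
    · intro t h1 h2
      have := LRC.mod_reflect hs hr (by omega) h1 (hNm ▸ h2)
      rw [← hNm] at this
      rw [hmemZ, LRC.mem_exps, this]
      have : N - t < a * s + b ↔ ¬ t ≤ δ₃ - 1 := by omega
      rw [this]
      have h3 : t ≤ N := h2.le
      tauto
  rw [hBr]
  refine ⟨?_, LRC.locality hs hr (by omega) hm hNm hα,
    LRC.minDist_range (by omega) hb1 hb hm hNm hL hα hd⟩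
  rw [LinearMap.finrank_range_of_inj (LRC.enc_injective hα (by omega) hL),
    Module.finrank_fintype_fun_eq_card, Fintype.card_coe, LRC.card_exps (by omega) hr hb, hab]
end
end

section
/- In the setting of the quasicyclic LRC construction below, for every l = 0,…,n-1 the punctured code B_l = {(c_l, c_{l+n}, c_{l+2n}, …, c_{l+nj}) : (c_0,…,c_{n(j+1)-1}) ∈ B} ⊆ F_q^{j+1} has (r,δ) locality; more precisely, for every residue w ∈ {0,…,ν-1}, the punctured code of B_l on the index set {t ∈ {0,…,j} : t ≡ w (mod ν)} (a set of size r+δ-1) has dimension at most r and minimum Hamming distance at least δ, and these ν index sets partition {0,…,j}. -/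
/-!
Put `ρ = r + δ - 1`, so that the length is `n * (j + 1) = (n * ν) * ρ`. The zero set `Z` contains
every `i + u * ρ` with `1 ≤ i ≤ δ - 1` and `u < n * ν`: write `u = l' + l * ν`. For fixed `i`, the
equations `∑ s, (c s * α ^ (s * i)) * (α ^ (ρ * s)) ^ u = 0` say that the vector
`s ↦ c s * α ^ (s * i)` is orthogonal to every polynomial of degree `< n * ν` in `β ^ s`, where
`β = α ^ ρ` is a primitive `n * ν`-th root of unity. A polynomial vanishing at all powers of `β`
but one isolates a single residue class modulo `n * ν` (`residue_sum_eq_zero`).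

The class of `l + n * w` consists of the positions `l + n * t` with `t ≡ w (mod ν)`, that is, of the
repair group `w` of the row `l`. So each punctured code satisfies
`∑ t, x t * y t ^ i = 0` for `1 ≤ i ≤ δ - 1`, with nonzero distinct points `y t = α ^ (l + t * n)`.
A polynomial vanishing on all but one point of the support bounds the minimum distance below by `δ`
(`minDistGE_of_moments`), and the Singleton bound (`finrank_le_of_minDistGE`) bounds the dimension
by `ρ - (δ - 1) = r`.
-/

open Polynomial Finset

attribute [local instance 10] Classical.propDecidable

noncomputable section

namespace LRC

/-- The `l`-th row code `B_l = {(c_l, c_{l+n}, …, c_{l+nj}) : c ∈ B}` of a code of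
length `n(j+1)` (indices taken mod `n(j+1)`, which is the identity for `l < n`). -/
def rowCode (F : Type) [Field F] (n j : ℕ) (hn : 0 < n)
    (B : Submodule F (Fin (n * (j + 1)) → F)) (l : ℕ) : Submodule F (Fin (j + 1) → F) :=
  B.map (LinearMap.funLeft F F fun t : Fin (j + 1) =>
    (⟨(l + (t : ℕ) * n) % (n * (j + 1)),
      Nat.mod_lt _ (Nat.mul_pos hn (Nat.succ_pos j))⟩ : Fin (n * (j + 1))))

end LRC

namespace LRC

/-! ### Vanishing moments and residue classes -/

/-- A weighted sum annihilating all monomials of degree `< D` annihilates all polynomials of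
degree `< D`. -/
lemma sum_mul_eval_eq_zero {F ι : Type} [Field F] (s : Finset ι) (a z : ι → F) (D : ℕ)
    (h : ∀ u < D, ∑ i ∈ s, a i * z i ^ u = 0) (p : F[X]) (hp : p.natDegree < D) :
    ∑ i ∈ s, a i * p.eval (z i) = 0 := by
  simp_rw [Polynomial.eval_eq_sum_range, Finset.mul_sum]
  rw [Finset.sum_comm]
  refine Finset.sum_eq_zero fun u hu => ?_
  have hu' : u < D := by
    have := Finset.mem_range.1 hu
    omega
  calc ∑ i ∈ s, a i * (p.coeff u * z i ^ u) = p.coeff u * ∑ i ∈ s, a i * z i ^ u := by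
        rw [Finset.mul_sum]
        exact Finset.sum_congr rfl fun i _ => by ring
    _ = 0 := by rw [h u hu', mul_zero]

/-- If the moments `∑ i, a i * (β ^ i) ^ u` vanish for all `u < M`, where `β` is a primitive `M`-th
root of unity, then `a` sums to zero over each residue class modulo `M`. -/
lemma residue_sum_eq_zero {F : Type} [Field F] (N M : ℕ) (β : F) (hβ : IsPrimitiveRoot β M)
    (a : Fin N → F) (h : ∀ u < M, ∑ i : Fin N, a i * (β ^ (i : ℕ)) ^ u = 0)
    (m : ℕ) (hm : m < M) :
    ∑ i ∈ Finset.univ.filter (fun i : Fin N => (i : ℕ) % M = m), a i = 0 := by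
  set p : F[X] := ∏ m' ∈ (Finset.range M).erase m, (X - C (β ^ m')) with hp
  have hdeg : p.natDegree < M := by
    rw [hp, Polynomial.natDegree_prod_of_monic _ _ fun i _ => monic_X_sub_C _]
    simp only [natDegree_X_sub_C, Finset.sum_const, smul_eq_mul, mul_one]
    rw [Finset.card_erase_of_mem (Finset.mem_range.2 hm), Finset.card_range]
    omega
  have hsum := sum_mul_eval_eq_zero Finset.univ a (fun i => β ^ (i : ℕ)) M h p hdeg
  have hmod : ∀ i : ℕ, β ^ i = β ^ (i % M) := fun i => by
    rw [hβ.eq_orderOf, pow_mod_orderOf]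
  have hne : p.eval (β ^ m) ≠ 0 := by
    rw [hp, Polynomial.eval_prod, Finset.prod_ne_zero_iff]
    intro m' hm'
    rw [Finset.mem_erase, Finset.mem_range] at hm'
    simp only [eval_sub, eval_X, eval_C, sub_ne_zero]
    exact fun hEq => hm'.1 (hβ.pow_inj hm hm'.2 hEq).symm
  have hterm : ∀ i : Fin N, a i * p.eval (β ^ (i : ℕ)) =
      if (i : ℕ) % M = m then a i * p.eval (β ^ m) else 0 := by
    intro i
    rw [hmod i]
    split_ifs with hi
    · rw [hi]
    · have : p.eval (β ^ ((i : ℕ) % M)) = 0 := by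
        rw [hp, Polynomial.eval_prod]
        refine Finset.prod_eq_zero (i := (i : ℕ) % M) ?_ (by simp)
        rw [Finset.mem_erase, Finset.mem_range]
        exact ⟨hi, Nat.mod_lt _ (by omega)⟩
      rw [this, mul_zero]
  simp_rw [hterm] at hsum
  rw [← Finset.sum_filter, ← Finset.sum_mul] at hsum
  exact (mul_eq_zero.1 hsum).resolve_right hne

/-! ### Distance and dimension bounds -/

/-- BCH-type bound: `D` consecutive vanishing moments at distinct nonzero points force
weight at least `D + 1`. -/
lemma minDistGE_of_moments {F ι : Type} [Field F] [Fintype ι] (V : Set (ι → F)) (D : ℕ)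
    (y : ι → F) (hy : Function.Injective y) (hy0 : ∀ i, y i ≠ 0)
    (h : ∀ x ∈ V, ∀ i, 1 ≤ i → i ≤ D → ∑ t, x t * y t ^ i = 0) :
    minDistGE F V (D + 1) := by
  intro x hx hx0
  by_contra! hlt
  obtain ⟨t₀, ht₀⟩ := Function.ne_iff.1 hx0
  set s : Finset ι := Finset.univ.filter fun t => x t ≠ 0 with hs
  have hcard : s.card ≤ D := by
    have : s.card = hammingNorm x := by
      rw [hs, hammingNorm]
    omega
  have hmem : t₀ ∈ s := by simpa [hs] using ht₀
  set p : F[X] := ∏ t ∈ s.erase t₀, (X - C (y t)) with hp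
  have hdeg : p.natDegree < D := by
    rw [hp, Polynomial.natDegree_prod_of_monic _ _ fun i _ => monic_X_sub_C _]
    simp only [natDegree_X_sub_C, Finset.sum_const, smul_eq_mul, mul_one]
    rw [Finset.card_erase_of_mem hmem]
    have := Finset.card_pos.2 ⟨t₀, hmem⟩
    omega
  -- The moments start at exponent `1`, so one factor `y t` goes into the weights.
  have hsum := sum_mul_eval_eq_zero Finset.univ (fun t => x t * y t) y D (fun u hu => by
    rw [← h x hx (u + 1) (by omega) (by omega)]
    exact Finset.sum_congr rfl fun t _ => by ring) p hdeg
  rw [Finset.sum_eq_single t₀] at hsum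
  · refine mul_ne_zero (mul_ne_zero ht₀ (hy0 t₀)) ?_ hsum
    rw [hp, Polynomial.eval_prod, Finset.prod_ne_zero_iff]
    intro t ht
    simp only [eval_sub, eval_X, eval_C, sub_ne_zero]
    exact fun hEq => (Finset.mem_erase.1 ht).1 (hy hEq).symm
  · intro t _ ht
    by_cases hxt : x t = 0
    · simp [hxt]
    · have : p.eval (y t) = 0 := by
        rw [hp, Polynomial.eval_prod]
        refine Finset.prod_eq_zero (i := t) ?_ (by simp)
        simp [hs, ht, hxt]
      rw [this, mul_zero]
  · simp

/-- Singleton bound. -/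
lemma finrank_le_of_minDistGE {F ι : Type} [Field F] [Fintype ι] (V : Submodule F (ι → F))
    (D R : ℕ) (hcard : Fintype.card ι = R + D) (h : minDistGE F (V : Set (ι → F)) (D + 1)) :
    Module.finrank F V ≤ R := by
  obtain ⟨T, -, hT⟩ := Finset.exists_subset_card_eq
    (s := (Finset.univ : Finset ι)) (n := R) (by rw [Finset.card_univ]; omega)
  -- Forgetting the `D` coordinates outside `T` is injective on `V`.
  let f : V →ₗ[F] (↥T → F) := (LinearMap.funLeft F F (Subtype.val : ↥T → ι)).comp V.subtype
  have hf : Function.Injective f := by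
    rw [← LinearMap.ker_eq_bot, LinearMap.ker_eq_bot']
    rintro ⟨x, hx⟩ hfx
    by_contra hne
    have hx0 : x ≠ 0 := fun h0 => hne (by simp [h0])
    have hle := h x hx hx0
    have hsub : hammingNorm x ≤ Tᶜ.card := by
      rw [hammingNorm]
      refine Finset.card_le_card fun t ht => ?_
      rw [Finset.mem_compl]
      intro htT
      exact (Finset.mem_filter.1 ht).2 (congrFun hfx ⟨t, htT⟩)
    rw [Finset.card_compl, hT, hcard] at hsub
    omega
  have := LinearMap.finrank_le_finrank_of_injective hf
  simpa [hT] using this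

/-! ### Repair groups of a row -/

lemma card_residue (N ν ρ w : ℕ) (hN : N = ρ * ν) (hw : w < ν) :
    (Finset.univ.filter fun t : Fin N => (t : ℕ) % ν = w).card = ρ := by
  have hν : 0 < ν := by omega
  rw [← Finset.card_range ρ]
  refine (Finset.card_bij (fun v hv => (⟨w + ν * v, ?_⟩ : Fin N)) ?_ ?_ ?_).symm
  · have hv' := Finset.mem_range.1 hv
    subst hN
    nlinarith [Nat.mul_le_mul_left ν (Nat.succ_le_of_lt hv')]
  · intro v hv
    simp [Nat.mod_eq_of_lt hw]
  · intro v _ v' _ hEq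
    have : w + ν * v = w + ν * v' := congrArg Fin.val hEq
    exact Nat.eq_of_mul_eq_mul_left hν (by omega)
  · intro t ht
    have ht' := (Finset.mem_filter.1 ht).2
    refine ⟨(t : ℕ) / ν, Finset.mem_range.2 ?_, Fin.ext ?_⟩
    · exact (Nat.div_lt_iff_lt_mul hν).2 (hN ▸ t.2)
    · change w + ν * ((t : ℕ) / ν) = t
      rw [← ht']
      exact Nat.mod_add_div _ _

/-- The parity checks of a code word localise to the positions `l + t * n` with
`t ≡ w (mod ν)`, which form the residue class of `l + n * w` modulo `n * ν`. -/
lemma row_moment {F : Type} [Field F] (n ν ρ J : ℕ) (hn : 0 < n) (hJ : J = ρ * ν) (hJ0 : 0 < J)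
    (α : F) (hα : IsPrimitiveRoot α (n * J)) (c : Fin (n * J) → F) (i : ℕ)
    (hc : ∀ u < n * ν, evalMap F (n * J) α (i + u * ρ) c = 0)
    (l w : ℕ) (hl : l < n) (hw : w < ν) :
    ∑ t ∈ Finset.univ.filter (fun t : Fin J => (t : ℕ) % ν = w),
      c ⟨(l + (t : ℕ) * n) % (n * J), Nat.mod_lt _ (Nat.mul_pos hn hJ0)⟩ *
        (α ^ (l + (t : ℕ) * n)) ^ i = 0 := by
  have hν : 0 < ν := by omega
  have hlt : ∀ t : Fin J, l + (t : ℕ) * n < n * J := fun t => by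
    nlinarith [Nat.mul_le_mul_left n (Nat.succ_le_of_lt t.2)]
  have hβ : IsPrimitiveRoot (α ^ ρ) (n * ν) :=
    hα.pow (Nat.mul_pos hn hJ0) (by rw [hJ]; ring)
  have hm : l + n * w < n * ν := by
    nlinarith [Nat.mul_le_mul_left n (Nat.succ_le_of_lt hw)]
  have key := residue_sum_eq_zero (n * J) (n * ν) (α ^ ρ) hβ
    (fun s => c s * (α ^ (s : ℕ)) ^ i) (fun u hu => by
      rw [← hc u hu]
      simp only [evalMap, LinearMap.sum_apply, LinearMap.smul_apply, LinearMap.proj_apply,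
        smul_eq_mul]
      refine Finset.sum_congr rfl fun s _ => ?_
      rw [mul_assoc, mul_comm]
      congr 1
      simp only [← pow_mul, ← pow_add]
      congr 1
      ring) (l + n * w) hm
  rw [← key]
  have hmodn : ∀ x : ℕ, (l + x * n) % (n * ν) = l + n * (x % ν) := fun x => by
    rw [Nat.mod_mul, Nat.add_mul_mod_self_right, Nat.mod_eq_of_lt hl,
      Nat.add_mul_div_right _ _ hn, Nat.div_eq_of_lt hl, zero_add]
  refine Finset.sum_bij (fun t _ => ⟨l + (t : ℕ) * n, hlt t⟩) ?_ ?_ ?_ ?_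
  · intro t ht
    have ht' := (Finset.mem_filter.1 ht).2
    refine Finset.mem_filter.2 ⟨Finset.mem_univ _, ?_⟩
    rw [hmodn, ht']
  · intro t _ t' _ hEq
    have : l + (t : ℕ) * n = l + (t' : ℕ) * n := congrArg Fin.val hEq
    exact Fin.ext (Nat.eq_of_mul_eq_mul_right hn (by omega))
  · intro s hs
    have hs' := (Finset.mem_filter.1 hs).2
    have hsl : (s : ℕ) % n = l := by
      rw [← Nat.mod_mul_right_mod (s : ℕ) n ν, hs', Nat.add_mul_mod_self_left, Nat.mod_eq_of_lt hl]
    have hsd : l + (s : ℕ) / n * n = s := by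
      rw [← hsl]
      exact Nat.mod_add_div' _ _
    refine ⟨⟨(s : ℕ) / n, Nat.div_lt_of_lt_mul s.2⟩, ?_, Fin.ext hsd⟩
    refine Finset.mem_filter.2 ⟨Finset.mem_univ _, ?_⟩
    have h1 := hmodn ((s : ℕ) / n)
    rw [hsd, hs'] at h1
    exact (Nat.eq_of_mul_eq_mul_left hn (Nat.add_left_cancel h1)).symm
  · intro t _
    simp only [Nat.mod_eq_of_lt (hlt t)]

end LRC

/-! ### Locality of the row codes -/

/-- Row codes of the quasicyclic LRC code `B` have `(r,δ)` locality,
with explicit repair groups given by residues mod `ν`. -/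
theorem statement17 (q n k r δ ν j : ℕ) (F : Type) [Field F] [Fintype F]
    (hq : ∃ p s : ℕ, p.Prime ∧ 0 < s ∧ q = p ^ s)
    (hcard : Fintype.card F = q)
    (hk : 1 ≤ k) (hr : 1 ≤ r) (hδ : 2 ≤ δ) (hν : 1 ≤ ν) (hn : 0 < n)
    (hkj : k ≤ j + 1) (hjn : j + 1 ≤ n) (hj1 : j + 1 = (r + δ - 1) * ν)
    (hdvd : n * (j + 1) ∣ q - 1)
    (α : F) (hα : IsPrimitiveRoot α (n * (j + 1)))
    (δ₃ : ℕ) (hδ₃pos : 1 ≤ δ₃)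
    (hδ₃ : (δ₃ : ℤ) = ((n : ℤ) - k) * (j + 1) + δ -
      (((k * (j + 1) + r - 1) / r : ℕ) : ℤ) * ((δ : ℤ) - 1))
    (Z : Set ℕ)
    (hZ : Z = {t | ∃ l < n, ∃ l' < ν, ∃ i, 1 ≤ i ∧ i ≤ δ - 1 ∧
                    t = i + l' * (r + δ - 1) + l * (j + 1)} ∪
              {t | 1 ≤ t ∧ t ≤ δ₃ - 1})
    (B : Submodule F (Fin (n * (j + 1)) → F))
    (hB : B = LRC.zeroCode F (n * (j + 1)) α Z) :
    ∀ l < n,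
      LRC.HasLocalityRD F (LRC.rowCode F n j hn B l) r δ ∧
      (∀ w < ν, ∀ S : Finset (Fin (j + 1)),
        S = (Finset.univ.filter fun t : Fin (j + 1) => (t : ℕ) % ν = w) →
        S.card = r + δ - 1 ∧
        Module.finrank F (LRC.punctured F (LRC.rowCode F n j hn B l) S) ≤ r ∧
        LRC.minDistGE F
          ((LRC.punctured F (LRC.rowCode F n j hn B l) S : Submodule F (↥S → F)) :
            Set (↥S → F)) δ) ∧
      ((Finset.range ν).biUnion
          (fun w => Finset.univ.filter fun t : Fin (j + 1) => (t : ℕ) % ν = w) =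
        Finset.univ ∧
      ∀ w w', w < ν → w' < ν → w ≠ w' →
        Disjoint (Finset.univ.filter fun t : Fin (j + 1) => (t : ℕ) % ν = w)
          (Finset.univ.filter fun t : Fin (j + 1) => (t : ℕ) % ν = w')) := by
  intro l hl
  have hgroup : ∀ w < ν, ∀ S : Finset (Fin (j + 1)),
      S = (Finset.univ.filter fun t : Fin (j + 1) => (t : ℕ) % ν = w) →
      S.card = r + δ - 1 ∧
      Module.finrank F (LRC.punctured F (LRC.rowCode F n j hn B l) S) ≤ r ∧
      LRC.minDistGE F
        ((LRC.punctured F (LRC.rowCode F n j hn B l) S : Submodule F (↥S → F)) :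
          Set (↥S → F)) δ := by
    intro w hw S hS
    have hcardS : S.card = r + δ - 1 := hS ▸ LRC.card_residue (j + 1) ν (r + δ - 1) w hj1 hw
    have hd : LRC.minDistGE F
        ((LRC.punctured F (LRC.rowCode F n j hn B l) S : Submodule F (↥S → F)) :
          Set (↥S → F)) (δ - 1 + 1) := by
      refine LRC.minDistGE_of_moments _ (δ - 1) (fun t => α ^ (l + ((t : Fin (j + 1)) : ℕ) * n))
        ?_ ?_ ?_
      · intro t t' hEq
        have hlt : ∀ t : Fin (j + 1), l + (t : ℕ) * n < n * (j + 1) := fun t => by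
          nlinarith [Nat.mul_le_mul_left n (Nat.succ_le_of_lt t.2)]
        have h1 := hα.pow_inj (hlt t) (hlt t') hEq
        exact Subtype.ext (Fin.ext (Nat.eq_of_mul_eq_mul_right hn (by omega)))
      · exact fun t => pow_ne_zero _ (hα.ne_zero (Nat.mul_pos hn (Nat.succ_pos j)).ne')
      · rintro x ⟨b, ⟨c, hc, rfl⟩, rfl⟩ i hi1 hi2
        have hzero : ∀ u < n * ν, LRC.evalMap F (n * (j + 1)) α (i + u * (r + δ - 1)) c = 0 := by
          intro u hu
          have hmem : i + u * (r + δ - 1) ∈ Z := by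
            rw [hZ]
            refine Or.inl ⟨u / ν, Nat.div_lt_of_lt_mul (by rwa [mul_comm] at hu), u % ν,
              Nat.mod_lt _ hν, i, hi1, hi2, ?_⟩
            rw [hj1]
            conv_lhs => rw [← Nat.mod_add_div u ν]
            ring
          have hcB : c ∈ LRC.zeroCode F (n * (j + 1)) α Z := hB ▸ hc
          simp only [LRC.zeroCode, Submodule.mem_iInf] at hcB
          exact hcB _ hmem
        have key := LRC.row_moment n ν (r + δ - 1) (j + 1) hn hj1 (Nat.succ_pos j) α hα c i hzero
          l w hl hw
        rw [← hS, ← Finset.sum_coe_sort] at key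
        exact key
    refine ⟨hcardS, ?_, ?_⟩
    · refine LRC.finrank_le_of_minDistGE _ (δ - 1) r ?_ hd
      rw [Fintype.card_coe, hcardS]
      omega
    · rwa [Nat.sub_add_cancel (by omega : 1 ≤ δ)] at hd
  refine ⟨fun t => ?_, hgroup, ?_, ?_⟩
  · obtain ⟨h1, -, h3⟩ := hgroup ((t : ℕ) % ν) (Nat.mod_lt _ hν) _ rfl
    exact ⟨_, by simp, h1.le, h3⟩
  · ext t
    simpa using Nat.mod_lt _ hν
  · intro w w' _ _ hne
    rw [Finset.disjoint_left]
    intro t ht ht'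
    exact hne ((Finset.mem_filter.1 ht).2.symm.trans (Finset.mem_filter.1 ht').2)
end
end

section
/- Let q be a prime power, let n | (q-1), and let r_1, r_2 be positive integers with r_1 ≤ r_2, (r_1+1) | n and (r_2+1) | n; set ν_1 = n/(r_1+1) and ν_2 = n/(r_2+1). Let α ∈ F_q be a primitive n-th root of unity. Let Z ⊆ {0,…,n-1}×{0,…,n-1} be any set containing L_2 = {(a,b) : a ≡ 0 (mod r_1+1)} ∪ {(a,b) : b ≡ 0 (mod r_2+1)}, and let C = {c ∈ F_q^{n×n} : Σ_{i=0}^{n-1} Σ_{j=0}^{n-1} c_{i,j} α^{ai+bj} = 0 for all (a,b) ∈ Z} be the corresponding two-dimensional cyclic code. Then every coordinate (i,j) ∈ {0,…,n-1}² has two disjoint recovering sets of sizes r_1 and r_2: the sets R_1 = {((i + sν_1) mod n, j) : s = 1,…,r_1} and R_2 = {(i, (j + sν_2) mod n) : s = 1,…,r_2} are disjoint, neither contains (i,j), and there exist linear functions φ_1 : F_q^{r_1} → F_q and φ_2 : F_q^{r_2} → F_q such that c_{i,j} = φ_1(c|_{R_1}) = φ_2(c|_{R_2}) for every c ∈ C.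 -/
/-!
A word whose transform `∑ x, f x * α ^ (m * u * x)` vanishes for all `u < n / m` sums to zero on
each residue class modulo `ν = n / m` (`sum_class_eq_zero`): `α ^ m` is a primitive `ν`-th root of
unity, so inverting the transform of length `ν` isolates the class sums, and `ν` is invertible in
`F`.

For a bi-cyclic codeword whose zeros contain all `(a, b)` with `m ∣ a`, this is used twice
(`sum_class_eq_zero₂`). For fixed `b`, the row transforms `x ↦ ∑ y, c (x, y) * α ^ (b * y)` sum to
zero on each class modulo `ν`. Hence the class sums `y ↦ ∑ x, c (x, y)` have zero transform at
every `b < n`, and the case `m = 1` shows that they vanish. The class of `i` modulo `ν` consists of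
the `m` distinct points `(i + s * ν) % n` with `s < m`, so with `m = r + 1` the entry at `(i, j)`
is minus the sum of the other `r` entries of its class. Exchanging the coordinates gives the second
recovering set.
-/


open Polynomial Finset

attribute [local instance 10] Classical.propDecidable

noncomputable section

namespace LRC

variable (F : Type) [Field F]

/-- The linear functional `c ↦ ∑_{x,y} c_{x,y} α^{a x + b y}` on `n × n` arrays. -/
def evalMap2 (n : ℕ) (α : F) (p : ℕ × ℕ) : ((Fin n × Fin n) → F) →ₗ[F] F :=
  ∑ x : Fin n × Fin n, α ^ (p.1 * (x.1 : ℕ) + p.2 * (x.2 : ℕ)) • LinearMap.proj x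

/-- The two-dimensional (bi-cyclic) code of length `n × n` with defining set of
zeros `Z ⊆ {0,…,n-1}²`. -/
def zeroCode2 (n : ℕ) (α : F) (Z : Set (ℕ × ℕ)) : Submodule F ((Fin n × Fin n) → F) :=
  ⨅ p ∈ Z, LinearMap.ker (evalMap2 F n α p)

end LRC

namespace LRC

/-- Character orthogonality applied to a word of length `n`: if the transform vanishes at all
multiples of `m`, then the word sums to zero on each residue class modulo `n / m`. -/
lemma sum_class_eq_zero {F : Type} [Field F] {n m : ℕ} (hn : 0 < n) (hm : m ∣ n) {α : F}
    (hα : IsPrimitiveRoot α n) (f : Fin n → F)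
    (h : ∀ u < n / m, ∑ x : Fin n, α ^ (m * u * (x : ℕ)) * f x = 0) (i : Fin n) :
    ∑ x ∈ univ.filter (fun x : Fin n => (x : ℕ) ≡ i [MOD n / m]), f x = 0 := by
  obtain ⟨ν, rfl⟩ := hm
  have hm0 : 0 < m := Nat.pos_of_mul_pos_right hn
  have hν0 : 0 < ν := Nat.pos_of_mul_pos_left hn
  rw [Nat.mul_div_cancel_left _ hm0] at h ⊢
  have hβ : IsPrimitiveRoot (α ^ m) ν := hα.pow hn rfl
  have : NeZero ν := ⟨hν0.ne'⟩
  have hνF : (ν : F) ≠ 0 := (hβ.neZero').out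
  -- `m * ν - i` plays the role of `-i`, which keeps all exponents natural.
  have key : ∀ x : Fin (m * ν),
      ∑ u ∈ range ν, (α ^ m) ^ (u * ((x : ℕ) + (m * ν - i)))
        = if (x : ℕ) ≡ i [MOD ν] then (ν : F) else 0 := by
    intro x
    have hi := i.2
    have e : ((x : ℕ) ≡ i [MOD ν]) ↔ ν ∣ (x : ℕ) + (m * ν - i) := by
      rw [Nat.ModEq.comm, Nat.modEq_iff_dvd, ← Int.natCast_dvd_natCast]
      push_cast [Nat.cast_sub hi.le]
      rw [show ((x : ℤ) + (m * ν - i)) = (x - i) + m * ν by ring]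
      exact (dvd_add_left (dvd_mul_left _ _)).symm
    simp_rw [mul_comm _ ((x : ℕ) + (m * ν - i)), pow_mul _ ((x : ℕ) + (m * ν - i))]
    split_ifs with hx
    · rw [(hβ.pow_eq_one_iff_dvd _).2 (e.1 hx)]
      simp
    · have h1 : (α ^ m) ^ ((x : ℕ) + (m * ν - i)) ≠ 1 := fun h1 =>
        hx (e.2 ((hβ.pow_eq_one_iff_dvd _).1 h1))
      rw [geom_sum_eq h1, ← pow_mul, mul_comm, pow_mul, hβ.pow_eq_one]
      simp
  have tot : ∑ x : Fin (m * ν),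
      (∑ u ∈ range ν, (α ^ m) ^ (u * ((x : ℕ) + (m * ν - i)))) * f x = 0 := by
    simp_rw [sum_mul]
    rw [sum_comm]
    refine sum_eq_zero fun u hu => ?_
    have := congrArg (fun z => (α ^ m) ^ (u * (m * ν - i)) * z) (h u (mem_range.1 hu))
    simp only [mul_zero, mul_sum] at this
    rw [← this]
    refine sum_congr rfl fun x _ => ?_
    ring
  simp_rw [key, ite_mul, zero_mul] at tot
  rw [← sum_filter, ← mul_sum] at tot
  exact (mul_eq_zero.1 tot).resolve_left hνF

/-- If the two-dimensional transform vanishes at all `(a, b)` with `m ∣ a`, then every line in the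
first direction sums to zero on each residue class modulo `n / m`. -/
lemma sum_class_eq_zero₂ {F : Type} [Field F] {n m : ℕ} (hn : 0 < n) (hm : m ∣ n) {α : F}
    (hα : IsPrimitiveRoot α n) (f : Fin n → Fin n → F)
    (h : ∀ u < n / m, ∀ b < n,
      ∑ x : Fin n, ∑ y : Fin n, α ^ (m * u * (x : ℕ) + b * (y : ℕ)) * f x y = 0) (i j : Fin n) :
    ∑ x ∈ univ.filter (fun x : Fin n => (x : ℕ) ≡ i [MOD n / m]), f x j = 0 := by
  have h1 := sum_class_eq_zero hn (one_dvd n) hα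
    (fun y => ∑ x ∈ univ.filter (fun x : Fin n => (x : ℕ) ≡ i [MOD n / m]), f x y) ?_ j
  · have e : (univ.filter fun y : Fin n => (y : ℕ) ≡ j [MOD n / 1]) = {j} := by
      ext y
      simp only [Nat.div_one, mem_filter, mem_univ, true_and, mem_singleton, Fin.ext_iff]
      exact ⟨fun hy => hy.eq_of_lt_of_lt y.2 j.2, fun hy => hy ▸ rfl⟩
    rwa [e, sum_singleton] at h1
  · intro b hb
    rw [Nat.div_one] at hb
    have h2 := sum_class_eq_zero hn hm hα
      (fun x => ∑ y : Fin n, α ^ (b * (y : ℕ)) * f x y) ?_ i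
    · rw [sum_comm] at h2
      rw [← h2]
      refine sum_congr rfl fun y _ => ?_
      rw [one_mul, mul_sum]
    · intro u hu
      rw [← h u hu b hb]
      refine sum_congr rfl fun x _ => ?_
      rw [mul_sum]
      refine sum_congr rfl fun y _ => ?_
      ring

/-- The point `i + s * ν` on the cycle of length `n`. -/
def shift {n : ℕ} (hn : 0 < n) (ν : ℕ) (i : Fin n) (s : ℕ) : Fin n :=
  ⟨((i : ℕ) + s * ν) % n, Nat.mod_lt _ hn⟩

lemma shift_zero {n : ℕ} (hn : 0 < n) (ν : ℕ) (i : Fin n) : shift hn ν i 0 = i := by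
  ext
  simp [shift, Nat.mod_eq_of_lt i.2]

lemma shift_injOn {n m : ℕ} (hn : 0 < n) (hm : m ∣ n) (i : Fin n) :
    Set.InjOn (shift hn (n / m) i) (range m : Set ℕ) := by
  obtain ⟨ν, rfl⟩ := hm
  have hm0 : 0 < m := Nat.pos_of_mul_pos_right hn
  have hν0 : 0 < ν := Nat.pos_of_mul_pos_left hn
  rw [Nat.mul_div_cancel_left _ hm0]
  intro s hs t ht hst
  rw [coe_range, Set.mem_Iio] at hs ht
  have h1 : (i : ℕ) + s * ν ≡ i + t * ν [MOD m * ν] := congrArg Fin.val hst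
  have h2 : s * ν ≡ t * ν [MOD m * ν] := Nat.ModEq.add_left_cancel' _ h1
  exact (Nat.ModEq.mul_right_cancel' hν0.ne' h2).eq_of_lt_of_lt hs ht

/-- The `m` shifts of `i` by multiples of `n / m` exhaust its residue class modulo `n / m`. -/
lemma image_shift {n m : ℕ} (hn : 0 < n) (hm : m ∣ n) (i : Fin n) :
    (range m).image (shift hn (n / m) i)
      = univ.filter fun x : Fin n => (x : ℕ) ≡ i [MOD n / m] := by
  obtain ⟨ν, rfl⟩ := hm
  have hm0 : 0 < m := Nat.pos_of_mul_pos_right hn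
  rw [Nat.mul_div_cancel_left _ hm0]
  ext x
  simp only [mem_image, mem_range, mem_filter, mem_univ, true_and]
  constructor
  · rintro ⟨s, -, rfl⟩
    have h1 : ((i : ℕ) + s * ν) % (m * ν) ≡ i + s * ν [MOD ν] :=
      (Nat.mod_modEq _ _).of_dvd (dvd_mul_left _ _)
    exact h1.trans (by simp [Nat.ModEq])
  · intro hx
    have hi := i.2
    have hd : ν ∣ (x : ℕ) + m * ν - i := by
      refine (Nat.modEq_iff_dvd' (by omega)).1 (hx.symm.trans ?_)
      simp [Nat.ModEq]
    obtain ⟨k, hk⟩ := hd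
    refine ⟨k % m, Nat.mod_lt _ hm0, Fin.ext ?_⟩
    have h1 : k % m * ν ≡ k * ν [MOD m * ν] := (Nat.mod_modEq k m).mul_right' ν
    have h2 : (i : ℕ) + k % m * ν ≡ x [MOD m * ν] := by
      refine (h1.add_left _).trans ?_
      have : (i : ℕ) + k * ν = x + m * ν := by rw [mul_comm k, ← hk]; omega
      rw [this]
      simp [Nat.ModEq]
    exact Nat.ModEq.eq_of_lt_of_lt ((Nat.mod_modEq _ _).trans h2) (Nat.mod_lt _ hn) x.2

lemma range_succ_eq_insert (r : ℕ) : range (r + 1) = insert 0 (Icc 1 r) := by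
  ext x
  simp only [mem_range, mem_insert, mem_Icc]
  omega

/-- A vanishing class sum expresses the entry at `i` through its `r` proper shifts. -/
lemma eq_neg_sum_shift {F : Type} [Field F] {n r : ℕ} (hn : 0 < n) (hm : r + 1 ∣ n)
    (f : Fin n → F) (i : Fin n)
    (h : ∑ x ∈ univ.filter (fun x : Fin n => (x : ℕ) ≡ i [MOD n / (r + 1)]), f x = 0) :
    f i = - ∑ s ∈ Icc 1 r, f (shift hn (n / (r + 1)) i s) := by
  rw [← image_shift hn hm, sum_image (shift_injOn hn hm i), range_succ_eq_insert,
    sum_insert (by simp), shift_zero] at h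
  exact eq_neg_of_add_eq_zero_left h

lemma shift_injOn_Icc {n r : ℕ} (hn : 0 < n) (hm : r + 1 ∣ n) (i : Fin n) :
    Set.InjOn (shift hn (n / (r + 1)) i) (Icc 1 r : Set ℕ) :=
  (shift_injOn hn hm i).mono (by
    rw [range_succ_eq_insert]
    exact_mod_cast subset_insert _ _)

lemma shift_ne {n r : ℕ} (hn : 0 < n) (hm : r + 1 ∣ n) (i : Fin n) {s : ℕ}
    (hs : s ∈ Icc 1 r) : shift hn (n / (r + 1)) i s ≠ i := by
  intro h
  have hs' := mem_Icc.1 hs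
  have := shift_injOn hn hm i (x₁ := s) (x₂ := 0) (by simp; omega) (by simp)
    (by rw [h, shift_zero])
  omega

/-- A parity check with all coefficients one, on a point `p` and the injective image of `S`, gives
recovery coefficients supported on that image. -/
lemma exists_recovery {F ι : Type} [Field F] [Fintype ι] [DecidableEq ι] (C : Submodule F (ι → F)) (p : ι)
    (S : Finset ℕ) (P : ℕ → ι) (hP : Set.InjOn P (S : Set ℕ))
    (h : ∀ c ∈ C, c p = - ∑ s ∈ S, c (P s)) :
    ∃ a : ι → F, (∀ x ∉ S.image P, a x = 0) ∧ ∀ c ∈ C, c p = ∑ x, a x * c x := by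
  refine ⟨fun x => if x ∈ S.image P then -1 else 0, fun x hx => if_neg hx, fun c hc => ?_⟩
  simp_rw [ite_mul, zero_mul]
  rw [← sum_filter, filter_mem_eq_inter, univ_inter, sum_image hP, h c hc]
  simp

lemma sum_eq_zero_of_mem {F : Type} [Field F] {n : ℕ} {α : F} {Z : Set (ℕ × ℕ)}
    {c : Fin n × Fin n → F} (hc : c ∈ zeroCode2 F n α Z) {a b : ℕ} (h : (a, b) ∈ Z) :
    ∑ x : Fin n, ∑ y : Fin n, α ^ (a * (x : ℕ) + b * (y : ℕ)) * c (x, y) = 0 := by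
  simp only [zeroCode2, Submodule.mem_iInf] at hc
  have := hc _ h
  simpa [evalMap2, Fintype.sum_prod_type] using this

end LRC

/-- Bi-cyclic codes have two disjoint recovering sets of sizes
`r₁` and `r₂` for every coordinate. -/
theorem statement19 (q n r₁ r₂ : ℕ) (F : Type) [Field F] [Fintype F]
    (hq : ∃ p s : ℕ, p.Prime ∧ 0 < s ∧ q = p ^ s)
    (hcard : Fintype.card F = q)
    (hn : 0 < n) (hdvd : n ∣ q - 1)
    (hr₁ : 0 < r₁) (hr₁₂ : r₁ ≤ r₂)
    (h1 : (r₁ + 1) ∣ n) (h2 : (r₂ + 1) ∣ n)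
    (α : F) (hα : IsPrimitiveRoot α n)
    (Z : Set (ℕ × ℕ))
    (hZsub : ∀ p ∈ Z, p.1 < n ∧ p.2 < n)
    (hL : ∀ p : ℕ × ℕ, p.1 < n → p.2 < n →
      (p.1 % (r₁ + 1) = 0 ∨ p.2 % (r₂ + 1) = 0) → p ∈ Z)
    (C : Submodule F ((Fin n × Fin n) → F)) (hC : C = LRC.zeroCode2 F n α Z) :
    ∀ i j : Fin n, ∀ R₁ R₂ : Finset (Fin n × Fin n),
      R₁ = (Finset.Icc 1 r₁).image (fun s =>
        ((⟨((i : ℕ) + s * (n / (r₁ + 1))) % n, Nat.mod_lt _ hn⟩ : Fin n), j)) →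
      R₂ = (Finset.Icc 1 r₂).image (fun s =>
        (i, (⟨((j : ℕ) + s * (n / (r₂ + 1))) % n, Nat.mod_lt _ hn⟩ : Fin n))) →
      R₁.card = r₁ ∧ R₂.card = r₂ ∧ Disjoint R₁ R₂ ∧
      (i, j) ∉ R₁ ∧ (i, j) ∉ R₂ ∧
      (∃ a : Fin n × Fin n → F, (∀ x ∉ R₁, a x = 0) ∧
        ∀ c ∈ C, c (i, j) = ∑ x, a x * c x) ∧
      (∃ a : Fin n × Fin n → F, (∀ x ∉ R₂, a x = 0) ∧
        ∀ c ∈ C, c (i, j) = ∑ x, a x * c x) := by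
  intro i j R₁ R₂ hR₁ hR₂
  subst hC
  have lt_of : ∀ {m u : ℕ}, m ∣ n → u < n / m → m * u < n := by
    intro m u hm hu
    exact (Nat.mul_lt_mul_of_pos_left hu (Nat.pos_of_dvd_of_pos hm hn)).trans_eq
      (Nat.mul_div_cancel' hm)
  have hR₁' : R₁ = (Icc 1 r₁).image fun s => (LRC.shift hn (n / (r₁ + 1)) i s, j) := hR₁
  have hR₂' : R₂ = (Icc 1 r₂).image fun s => (i, LRC.shift hn (n / (r₂ + 1)) j s) := hR₂
  have inj₁ : Set.InjOn (fun s => (LRC.shift hn (n / (r₁ + 1)) i s, j)) (Icc 1 r₁ : Set ℕ) :=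
    fun s hs t ht hst => LRC.shift_injOn_Icc hn h1 i hs ht (congrArg Prod.fst hst)
  have inj₂ : Set.InjOn (fun s => (i, LRC.shift hn (n / (r₂ + 1)) j s)) (Icc 1 r₂ : Set ℕ) :=
    fun s hs t ht hst => LRC.shift_injOn_Icc hn h2 j hs ht (congrArg Prod.snd hst)
  clear hR₁ hR₂
  subst hR₁' hR₂'
  refine ⟨?_, ?_, ?_, ?_, ?_, ?_, ?_⟩
  · rw [card_image_of_injOn inj₁, Nat.card_Icc, Nat.add_sub_cancel]
  · rw [card_image_of_injOn inj₂, Nat.card_Icc, Nat.add_sub_cancel]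
  · rw [Finset.disjoint_left]
    intro x hx hx'
    obtain ⟨s, hs, rfl⟩ := mem_image.1 hx
    obtain ⟨t, ht, hst⟩ := mem_image.1 hx'
    exact LRC.shift_ne hn h1 i hs (congrArg Prod.fst hst).symm
  · intro hx
    obtain ⟨s, hs, hst⟩ := mem_image.1 hx
    exact LRC.shift_ne hn h1 i hs (congrArg Prod.fst hst)
  · intro hx
    obtain ⟨s, hs, hst⟩ := mem_image.1 hx
    exact LRC.shift_ne hn h2 j hs (congrArg Prod.snd hst)
  · refine LRC.exists_recovery _ _ _ _ inj₁ fun c hc => ?_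
    refine LRC.eq_neg_sum_shift hn h1 (fun x => c (x, j)) i ?_
    refine LRC.sum_class_eq_zero₂ hn h1 hα (fun x y => c (x, y)) (fun u hu b hb => ?_) i j
    exact LRC.sum_eq_zero_of_mem hc (hL _ (lt_of h1 hu) hb (Or.inl (Nat.mul_mod_right _ _)))
  · refine LRC.exists_recovery _ _ _ _ inj₂ fun c hc => ?_
    refine LRC.eq_neg_sum_shift hn h2 (fun y => c (i, y)) j ?_
    refine LRC.sum_class_eq_zero₂ hn h2 hα (fun y x => c (x, y)) (fun u hu b hb => ?_) j i
    rw [sum_comm]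
    simp_rw [add_comm _ (b * _)]
    exact LRC.sum_eq_zero_of_mem hc (hL _ hb (lt_of h2 hu) (Or.inr (Nat.mul_mod_right _ _)))
end
end
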